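/- For even m ≥ 4, the automorphism group of the Walecki tournament W_{1_m} is trivial: the only permutation φ of (ZMod n) ∪ {*} that is an automorphism of W_{1_m} is the identity. -/

import Mathlib

/-- Vertex set of the Walecki tournament on `2*m+1` vertices:
`ZMod (2*m)` together with the extra vertex `*`, encoded as `none`. -/
abbrev WVert (m : ℕ) := Option (ZMod (2 * m))

/-- The arc relation of the directed Hamilton cycle `C_j⁺`:
it has arcs `(*, j)` and `(j+m, *)`, together with the arcs `(j−k, j+k+1)` for
`0 ≤ k ≤ m−1` and `(j+k, j−k)` for `1 ≤ k ≤ m−1` (arithmetic in `ZMod (2*m)`). -/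
def Cplus (m : ℕ) (j : ZMod (2 * m)) (x y : WVert m) : Prop :=
  (x = none ∧ y = some j) ∨
  (x = some (j + (m : ZMod (2 * m))) ∧ y = none) ∨
  (∃ k : ℕ, k ≤ m - 1 ∧ x = some (j - (k : ZMod (2 * m))) ∧
    y = some (j + (k : ZMod (2 * m)) + 1)) ∨
  (∃ k : ℕ, 1 ≤ k ∧ k ≤ m - 1 ∧ x = some (j + (k : ZMod (2 * m))) ∧
    y = some (j - (k : ZMod (2 * m))))

/-- The arc relation of the Walecki tournament `W_u` with signature `u ∈ (ZMod 2)^m`: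
the arcs of `C_j⁺` when `u_j = 1`, and the arcs of `C_j⁻` (the reverse of `C_j⁺`)
when `u_j = 0`, for `0 ≤ j ≤ m−1`. -/
def warc (m : ℕ) (u : Fin m → ZMod 2) (x y : WVert m) : Prop :=
  ∃ j : Fin m, (u j = 1 ∧ Cplus m ((j : ℕ) : ZMod (2 * m)) x y) ∨
               (u j = 0 ∧ Cplus m ((j : ℕ) : ZMod (2 * m)) y x)

/-- `d(a)` for the arc `a = (x,y)`: the number of vertices `z ≠ x, y` such that
`(y,z)` and `(z,x)` are both arcs, i.e. `x, y, z` span a directed triangle. -/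
noncomputable def dcount {α : Type*} (arc : α → α → Prop) (x y : α) : ℕ :=
  {z : α | z ≠ x ∧ z ≠ y ∧ arc y z ∧ arc z x}.ncard

/-- `i(a)` for the arc `a = (x,y)`: the number of vertices `z ≠ x, y` with arcs
`(z,x)` and `(z,y)`. -/
noncomputable def icount {α : Type*} (arc : α → α → Prop) (x y : α) : ℕ :=
  {z : α | z ≠ x ∧ z ≠ y ∧ arc z x ∧ arc z y}.ncard

/-- `o(a)` for the arc `a = (x,y)`: the number of vertices `z ≠ x, y` with arcs
`(x,z)` and `(y,z)`. -/
noncomputable def ocount {α : Type*} (arc : α → α → Prop) (x y : α) : ℕ :=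
  {z : α | z ≠ x ∧ z ≠ y ∧ arc x z ∧ arc y z}.ncard

/-- `b(a)` for the arc `a = (x,y)`: the number of vertices `z ≠ x, y` with arcs
`(x,z)` and `(z,y)`. -/
noncomputable def bcount {α : Type*} (arc : α → α → Prop) (x y : α) : ℕ :=
  {z : α | z ≠ x ∧ z ≠ y ∧ arc x z ∧ arc z y}.ncard

/-- Two elements of `ZMod (2*m)` have the same parity if their difference is
twice an element of `ZMod (2*m)`. -/
def sameParity (m : ℕ) (x y : ZMod (2 * m)) : Prop :=
  ∃ c : ZMod (2 * m), x - y = 2 * c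

/-- Three distinct vertices `x, y, z` induce a directed triangle:
the three arcs among them form a directed 3-cycle. -/
def dirTri {α : Type*} (arc : α → α → Prop) (x y z : α) : Prop :=
  x ≠ y ∧ y ≠ z ∧ x ≠ z ∧
    ((arc x y ∧ arc y z ∧ arc z x) ∨ (arc x z ∧ arc z y ∧ arc y x))

/-- The all-ones signature `1_m`. -/
def onesSig (m : ℕ) : Fin m → ZMod 2 := fun _ => 1

/-- The complementing register shift `R_1`:
`uR_1 = (1 − u_{m−1}, u_0, u_1, …, u_{m−2})`. -/
def shift1 (m : ℕ) (u : Fin m → ZMod 2) : Fin m → ZMod 2 := fun i =>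
  if (i : ℕ) = 0 then 1 - u ⟨m - 1, Nat.sub_lt i.pos Nat.one_pos⟩
  else u ⟨(i : ℕ) - 1, lt_of_le_of_lt (Nat.sub_le _ _) i.isLt⟩

/-- The inverse of the complementing register shift `R_1`:
`(uR_1⁻¹)_i = u_{i+1}` for `i < m−1` and `(uR_1⁻¹)_{m−1} = 1 − u_0`. -/
def unshift1 (m : ℕ) (u : Fin m → ZMod 2) : Fin m → ZMod 2 := fun i =>
  if h : (i : ℕ) = m - 1 then 1 - u ⟨0, i.pos⟩
  else u ⟨(i : ℕ) + 1, by have h1 := i.isLt; omega⟩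

/-- `R_t` for an integer `t`: the `t`-th iterate of the complementing register
shift `R_1` (inverse iterates when `t` is negative). `Rshift m t u = u R_t`. -/
def Rshift (m : ℕ) (t : ℤ) (u : Fin m → ZMod 2) : Fin m → ZMod 2 :=
  if 0 ≤ t then (shift1 m)^[t.toNat] u else (unshift1 m)^[(-t).toNat] u

/-- The permutation `σ = (0 1 2 ⋯ m−1)(n−1 n−2 ⋯ m)` of the vertex set:
it fixes `*`, maps `k ↦ k+1` for `0 ≤ k ≤ m−2`, `m−1 ↦ 0`,
`k ↦ k−1` for `m+1 ≤ k ≤ n−1`, and `m ↦ n−1`. -/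
def sigmaFun (m : ℕ) : WVert m → WVert m
  | none => none
  | some x =>
      if x.val < m then some ((((x.val + 1) % m : ℕ)) : ZMod (2 * m))
      else some (((m + (x.val - m + (m - 1)) % m : ℕ)) : ZMod (2 * m))

/-- The inverse of the permutation `σ`. -/
def sigmaInvFun (m : ℕ) : WVert m → WVert m
  | none => none
  | some x =>
      if x.val < m then some ((((x.val + (m - 1)) % m : ℕ)) : ZMod (2 * m))
      else some (((m + (x.val - m + 1) % m : ℕ)) : ZMod (2 * m))

/-- `σ^t` for an integer `t`: the `t`-th iterate of `σ`
(inverse iterates when `t` is negative). -/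
def sigmaZ (m : ℕ) (t : ℤ) : WVert m → WVert m :=
  if 0 ≤ t then (sigmaFun m)^[t.toNat] else (sigmaInvFun m)^[(-t).toNat]

/-!
The direction of the arc between two residues depends only on their order, on the parity of their
sum and on whether the sum reaches `2m`. Hence replacing `x` by `2m - x` changes its
out-neighbourhood in at most two vertices, and so does exchanging `0` with `m - 1` or `m` with
`2m - 1`, whereas no other vertex comes that close to `*`. Every automorphism therefore fixes `*`
and preserves its out-neighbourhood `{0, …, m - 1}`. Inside this set the arcs `x → x + 1` are
exactly those whose two ends have complementary out-neighbourhoods there, so the automorphism acts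
on it as a translation, that is, as the identity. The remaining residues are told apart by their
out-neighbours below `m`.
-/

section RelIso

variable {α β : Type*} {r : α → α → Prop} {s : β → β → Prop}

/-- Near twins of a digraph: distinct vertices whose out-neighbourhoods differ in at most two
vertices, which is as close as they can be in a regular tournament. Having no near twin
characterizes the vertex `*` of `W_{1_m}`. -/
def IsNearTwin (r : α → α → Prop) (x y : α) : Prop :=
  x ≠ y ∧ ∃ a b, ∀ z, z ≠ a → z ≠ b → (r x z ↔ r y z)

/-- The vertices `x` and `y` are opposite on the out-neighbourhood of `v`: every other vertex
there is an out-neighbour of exactly one of them. For `v = *` this characterizes the arcs between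
consecutive residues below `m`. -/
def OppositeOnOut (r : α → α → Prop) (v x y : α) : Prop :=
  ∀ z, r v z → z ≠ x → z ≠ y → (r x z ↔ ¬ r y z)

lemma IsNearTwin.map (e : r ≃r s) {x y : α} (h : IsNearTwin r x y) :
    IsNearTwin s (e x) (e y) := by
  obtain ⟨hne, a, b, hab⟩ := h
  refine ⟨e.injective.ne hne, e a, e b, e.surjective.forall.2 fun z hza hzb => ?_⟩
  simpa only [e.map_rel_iff] using hab z (ne_of_apply_ne e hza) (ne_of_apply_ne e hzb)

lemma OppositeOnOut.eq_or_eq {v x y z : α} (h : OppositeOnOut r v x y) (hz : r v z)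
    (hagree : r x z ↔ r y z) : z = x ∨ z = y := by
  by_contra! hne
  exact iff_not_self (hagree.symm.trans (h z hz hne.1 hne.2))

lemma OppositeOnOut.map (e : r ≃r s) {v x y : α} (h : OppositeOnOut r v x y) :
    OppositeOnOut s (e v) (e x) (e y) := by
  refine e.surjective.forall.2 fun z hvz hzx hzy => ?_
  simpa only [e.map_rel_iff] using
    h z (e.map_rel_iff.1 hvz) (ne_of_apply_ne e hzx) (ne_of_apply_ne e hzy)

end RelIso

section ZMod

variable {n : ℕ}

lemma zmod_natCast_eq_natCast_iff {a b : ℕ} (ha : a < 2 * n) (hb : b < n) :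
    (a : ZMod n) = b ↔ a = b ∨ a = b + n := by
  rw [ZMod.natCast_eq_natCast_iff', Nat.mod_eq_of_lt hb]
  obtain han | hna := lt_or_ge a n
  · rw [Nat.mod_eq_of_lt han]; omega
  · rw [Nat.mod_eq_sub_mod hna, Nat.mod_eq_of_lt (by omega)]; omega

variable [NeZero n]

lemma zmod_eq_natCast_iff {x : ZMod n} {t : ℕ} (ht : t < n) : x = t ↔ x.val = t := by
  rw [← ZMod.val_injective n |>.eq_iff, ZMod.val_cast_of_lt ht]

lemma zmod_eq_natCast_sub_natCast_iff {x : ZMod n} {j k : ℕ} (hj : j < n) (hk : k < n) :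
    x = (j : ZMod n) - k ↔ x.val + k = j ∨ x.val + k = j + n := by
  have hx := x.val_lt
  rw [eq_sub_iff_add_eq, ← zmod_natCast_eq_natCast_iff (by omega) hj, Nat.cast_add,
    ZMod.natCast_zmod_val]

lemma zmod_finEquiv_symm_val (x : ZMod n) : ((ZMod.finEquiv n).symm x : ℕ) = x.val := by
  cases n with
  | zero => exact (NeZero.ne 0 rfl).elim
  | succ n => rfl

end ZMod

section Code

variable {m : ℕ}

/-- The tournament `W_{1_m}` written on the codes `0, …, 2m`, where a vertex of `ZMod (2m)` is
coded by its least residue and `*` by `2m`. The direction of the arc between two residues depends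
only on their order and their sum, since the edge `{x, y}` belongs to the cycle `C_j` for which
`x + y` is `2j` or `2j + 1` modulo `2m`. -/
def CodeArc (m : ℕ) (x y : Fin (2 * m + 1)) : Prop :=
  (x.val = 2 * m ∧ y.val < m) ∨ (y.val = 2 * m ∧ m ≤ x.val ∧ x.val < 2 * m) ∨
    (x.val < 2 * m ∧ y.val < 2 * m ∧
      ((x.val < y.val ∧ ((x.val + y.val) % 2 = 0 ↔ 2 * m ≤ x.val + y.val)) ∨
       (y.val < x.val ∧ ((x.val + y.val) % 2 = 0 ↔ x.val + y.val < 2 * m))))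

lemma warc_onesSig_iff {x y : WVert m} :
    warc m (onesSig m) x y ↔ ∃ j < m, Cplus m (j : ZMod (2 * m)) x y := by
  simp [warc, onesSig, Fin.exists_iff]

lemma not_warc_none_none : ¬ warc m (onesSig m) none none := by
  simp [warc_onesSig_iff, Cplus]

variable [NeZero m]

lemma warc_none_some_iff {y : ZMod (2 * m)} :
    warc m (onesSig m) none (some y) ↔ y.val < m := by
  simp only [warc_onesSig_iff, Cplus, Option.some.injEq, reduceCtorEq, false_and, and_false,
    exists_false, or_false, true_and]
  constructor
  · rintro ⟨j, hj, hy⟩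
    rwa [(zmod_eq_natCast_iff (by omega)).1 hy]
  · exact fun hy => ⟨y.val, hy, (ZMod.natCast_zmod_val y).symm⟩

lemma warc_some_none_iff {x : ZMod (2 * m)} :
    warc m (onesSig m) (some x) none ↔ m ≤ x.val := by
  have hx := x.val_lt
  simp only [warc_onesSig_iff, Cplus, Option.some.injEq, reduceCtorEq, and_false,
    exists_false, or_false, false_or, and_true, ← Nat.cast_add]
  constructor
  · rintro ⟨j, hj, h⟩
    rw [(zmod_eq_natCast_iff (by omega)).1 h]
    omega
  · exact fun h => ⟨x.val - m, by omega, (zmod_eq_natCast_iff (by omega)).2 (by omega)⟩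

lemma cplus_some_some_iff {j : ℕ} (hj : j < m) {x y : ZMod (2 * m)} :
    Cplus m (j : ZMod (2 * m)) (some x) (some y) ↔
      (x.val + y.val = 2 * j + 1 ∧ x.val < y.val) ∨
      (x.val + y.val = 2 * j + 1 + 2 * m ∧ y.val < x.val) ∨
      (x.val + y.val = 2 * j ∧ y.val < x.val) ∨
      (x.val + y.val = 2 * j + 2 * m ∧ x.val < y.val) := by
  have hx := x.val_lt
  have hy := y.val_lt
  have hsub {z : ZMod (2 * m)} {k : ℕ} (hk : k ≤ m - 1) :
      z = (j : ZMod (2 * m)) - k ↔ z.val + k = j ∨ z.val + k = j + 2 * m :=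
    zmod_eq_natCast_sub_natCast_iff (by omega) (by omega)
  have hadd {z : ZMod (2 * m)} {k : ℕ} (hk : k ≤ m - 1) :
      z = (j : ZMod (2 * m)) + k ↔ z.val = j + k := by
    rw [← zmod_eq_natCast_iff (by omega), Nat.cast_add]
  have hadd_one {z : ZMod (2 * m)} {k : ℕ} (hk : k ≤ m - 1) :
      z = (j : ZMod (2 * m)) + k + 1 ↔ z.val = j + k + 1 := by
    rw [← zmod_eq_natCast_iff (by omega), Nat.cast_add, Nat.cast_add, Nat.cast_one]
  simp only [Cplus, Option.some.injEq, reduceCtorEq, false_and, and_false, false_or]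
  constructor
  · rintro (⟨k, hk, hxk, hyk⟩ | ⟨k, hk₁, hk, hxk, hyk⟩)
    · rw [hsub hk] at hxk
      rw [hadd_one hk] at hyk
      omega
    · rw [hadd hk] at hxk
      rw [hsub hk] at hyk
      omega
  · rintro (h | h | h | h)
    iterate 2
      have hk : y.val - j - 1 ≤ m - 1 := by omega
      exact Or.inl ⟨_, hk, (hsub hk).2 (by omega), (hadd_one hk).2 (by omega)⟩
    iterate 2
      have hk : x.val - j ≤ m - 1 := by omega
      exact Or.inr ⟨_, by omega, hk, (hadd hk).2 (by omega), (hsub hk).2 (by omega)⟩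

lemma warc_some_some_iff {x y : ZMod (2 * m)} :
    warc m (onesSig m) (some x) (some y) ↔
      (x.val < y.val ∧ ((x.val + y.val) % 2 = 0 ↔ 2 * m ≤ x.val + y.val)) ∨
      (y.val < x.val ∧ ((x.val + y.val) % 2 = 0 ↔ x.val + y.val < 2 * m)) := by
  have hx := x.val_lt
  have hy := y.val_lt
  rw [warc_onesSig_iff]
  constructor
  · rintro ⟨j, hj, h⟩
    rw [cplus_some_some_iff hj] at h
    omega
  · intro h
    obtain hlt | hge := lt_or_ge (x.val + y.val) (2 * m)
    · have hj : (x.val + y.val) / 2 < m := by omega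
      exact ⟨_, hj, (cplus_some_some_iff hj).2 (by omega)⟩
    · have hj : (x.val + y.val) / 2 - m < m := by omega
      exact ⟨_, hj, (cplus_some_some_iff hj).2 (by omega)⟩

/-- The coding of the vertices: `*` is the last element of `Fin (2m + 1)`. -/
def codeEquiv (m : ℕ) [NeZero m] : WVert m ≃ Fin (2 * m + 1) :=
  (Equiv.optionCongr (ZMod.finEquiv (2 * m)).symm.toEquiv).trans finSuccEquivLast.symm

lemma codeEquiv_none_val : (codeEquiv m none).val = 2 * m := rfl

lemma codeEquiv_some_val (x : ZMod (2 * m)) : (codeEquiv m (some x)).val = x.val := by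
  rw [← zmod_finEquiv_symm_val x]
  exact congrArg Fin.val (finSuccEquivLast_symm_some _)

lemma codeArc_codeEquiv_iff (x y : WVert m) :
    CodeArc m (codeEquiv m x) (codeEquiv m y) ↔ warc m (onesSig m) x y := by
  have hm := NeZero.pos m
  have hlt (z : ZMod (2 * m)) : z.val < 2 * m := z.val_lt
  rcases x with _ | x <;> rcases y with _ | y <;>
    simp only [CodeArc, codeEquiv_none_val, codeEquiv_some_val, true_and]
  · rw [iff_false_right not_warc_none_none]
    omega
  · have := hlt y
    rw [warc_none_some_iff]
    omega
  · have := hlt x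
    rw [warc_some_none_iff]
    omega
  · have := hlt x
    have := hlt y
    rw [warc_some_some_iff]
    omega

/-- The coding as an isomorphism of tournaments. -/
def codeIso (m : ℕ) [NeZero m] : warc m (onesSig m) ≃r CodeArc m :=
  ⟨codeEquiv m, codeArc_codeEquiv_iff _ _⟩

end Code

namespace CodeArc

variable {m : ℕ} {x y : Fin (2 * m + 1)}

lemma last_iff : CodeArc m (Fin.last (2 * m)) x ↔ x.val < m := by
  simp only [CodeArc, Fin.val_last, true_and]
  omega

lemma iff_of_lt (hx : x.val < m) (hy : y.val < m) :
    CodeArc m x y ↔ (x.val < y.val ∧ (x.val + y.val) % 2 = 1) ∨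
      (y.val < x.val ∧ (x.val + y.val) % 2 = 0) := by
  rw [CodeArc]
  omega

lemma exists_isNearTwin (hm : Even m) (hx : x.val < 2 * m) :
    ∃ y, IsNearTwin (CodeArc m) x y := by
  rw [Nat.even_iff] at hm
  have of_exceptions (y a b : Fin (2 * m + 1)) (hne : x.val ≠ y.val)
      (h : ∀ z : Fin (2 * m + 1), z.val ≠ a.val → z.val ≠ b.val →
        (CodeArc m x z ↔ CodeArc m y z)) : ∃ y, IsNearTwin (CodeArc m) x y :=
    ⟨y, Fin.ne_of_val_ne hne, a, b, by simpa only [Fin.ne_iff_vne] using h⟩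
  obtain h_zero | h_mid | h_neg : x.val = 0 ∨ x.val = m ∨ (x.val ≠ 0 ∧ x.val ≠ m) := by omega
  · refine of_exceptions ⟨m - 1, by omega⟩ ⟨m - 1, by omega⟩ ⟨m, by omega⟩ (by grind) ?_
    simp only [CodeArc]
    omega
  · refine of_exceptions ⟨2 * m - 1, by omega⟩ ⟨0, by omega⟩ ⟨m, by omega⟩ (by grind) ?_
    simp only [CodeArc]
    omega
  · -- The sums `x + z` and `(2m - x) + z` have the same parity, while `x < z` is equivalent to
    -- `2m < (2m - x) + z`: exchanging `x` and `2m - x` swaps the comparison of the endpoints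
    -- with the comparison of the sum against `2m`.
    refine of_exceptions ⟨2 * m - x, by omega⟩ ⟨max x (2 * m - x), by omega⟩ (Fin.last _)
      (by grind) ?_
    simp only [CodeArc, Fin.val_last]
    omega

lemma not_or_not_succ {i : ℕ} (hi : Even i) (him : i + 1 < m) (hx : x.val < 2 * m) :
    ¬ CodeArc m x ⟨i, by omega⟩ ∨ ¬ CodeArc m x ⟨i + 1, by omega⟩ := by
  rw [Nat.even_iff] at hi
  simp only [CodeArc]
  omega

lemma exists_ge (hx : x.val < 2 * m) : ∃ z : Fin (2 * m + 1), m ≤ z.val ∧ CodeArc m x z := by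
  have harc : CodeArc m x ⟨m, by omega⟩ ∨ CodeArc m x ⟨m + 1, by omega⟩ ∨
      CodeArc m x (Fin.last (2 * m)) := by
    simp only [CodeArc, Fin.val_last, true_and]
    omega
  obtain h | h | h := harc
  · exact ⟨_, le_rfl, h⟩
  · exact ⟨_, Nat.le_succ m, h⟩
  · exact ⟨_, Nat.le_mul_of_pos_left m two_pos, h⟩

lemma not_isNearTwin_last (hm : 4 ≤ m) : ¬ IsNearTwin (CodeArc m) (Fin.last (2 * m)) x := by
  rintro ⟨hne, a, b, hab⟩
  have hx : x.val < 2 * m := Fin.val_lt_last hne.symm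
  have exception (z : Fin (2 * m + 1)) (hz : ¬ (z.val < m ↔ CodeArc m x z)) : z = a ∨ z = b := by
    rw [← last_iff] at hz
    by_contra! hzab
    exact hz (hab z hzab.1 hzab.2)
  have exception_low (i : ℕ) (hi : Even i) (him : i + 1 < m) :
      ∃ z : Fin (2 * m + 1), (z.val = i ∨ z.val = i + 1) ∧ (z = a ∨ z = b) := by
    obtain h | h := not_or_not_succ hi him hx
    · exact ⟨_, Or.inl rfl, exception _ fun hz => h (hz.1 (Nat.lt_of_succ_lt him))⟩
    · exact ⟨_, Or.inr rfl, exception _ fun hz => h (hz.1 him)⟩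
  have exception_high : ∃ z : Fin (2 * m + 1), m ≤ z.val ∧ (z = a ∨ z = b) := by
    obtain ⟨z, hmz, hz⟩ := exists_ge hx
    exact ⟨z, hmz, exception z fun h => hmz.not_gt (h.2 hz)⟩
  obtain ⟨p, hp, hpab⟩ := exception_low 0 (by decide) (by omega)
  obtain ⟨q, hq, hqab⟩ := exception_low 2 (by decide) (by omega)
  obtain ⟨t, ht, htab⟩ := exception_high
  have hpq : p ≠ q := Fin.ne_of_val_ne (by omega)
  have hpt : p ≠ t := Fin.ne_of_val_ne (by omega)
  have hqt : q ≠ t := Fin.ne_of_val_ne (by omega)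
  grind

lemma oppositeOnOut_last_of_val_eq_succ (hy : y.val < m) (hxy : y.val = x.val + 1) :
    OppositeOnOut (CodeArc m) (Fin.last (2 * m)) x y := by
  intro z hz hzx hzy
  have hx : x.val < m := by omega
  rw [last_iff] at hz
  rw [iff_of_lt hx hz, iff_of_lt hy hz]
  omega

lemma val_eq_succ_of_oppositeOnOut_last (hm : Even m) (hx : x.val < m) (hy : y.val < m)
    (hxy : CodeArc m x y) (hopp : OppositeOnOut (CodeArc m) (Fin.last (2 * m)) x y) :
    y.val = x.val + 1 := by
  rw [Nat.even_iff] at hm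
  have eq_or_eq (k : ℕ) (hk : k < m)
      (hagree : (k < x.val ↔ k < y.val) ↔ (x.val + y.val) % 2 = 0) : k = x.val ∨ k = y.val := by
    have hagree' : CodeArc m x ⟨k, by omega⟩ ↔ CodeArc m y ⟨k, by omega⟩ := by
      simp only [iff_of_lt hx (y := ⟨k, _⟩) hk, iff_of_lt hy (y := ⟨k, _⟩) hk]
      omega
    simpa only [Fin.ext_iff] using hopp.eq_or_eq (last_iff.2 hk) hagree'
  obtain ⟨hlt, hodd⟩ | ⟨hlt, heven⟩ := (iff_of_lt hx hy).1 hxy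
  · by_contra hne
    have := eq_or_eq (x.val + 1) (by omega) (by omega)
    omega
  · obtain hy_zero | hy_pos := Nat.eq_zero_or_pos y.val
    · have := eq_or_eq (m - 1) (by omega) (by omega)
      omega
    · have := eq_or_eq 0 (by omega) (by omega)
      omega

lemma eq_of_forall_lt_iff (hx : m ≤ x.val) (hx' : x.val < 2 * m) (hy : m ≤ y.val)
    (hy' : y.val < 2 * m)
    (h : ∀ z : Fin (2 * m + 1), z.val < m → (CodeArc m x z ↔ CodeArc m y z)) : x = y := by
  wlog hxy : x.val < y.val generalizing x y
  · by_contra hne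
    exact hne (this hy hy' hx hx' (fun z hz => (h z hz).symm) (by omega)).symm
  have h_zero := h ⟨0, by omega⟩ (by grind)
  have h_neg := h ⟨2 * m - y, by omega⟩ (by grind)
  simp only [CodeArc] at h_zero h_neg
  omega

variable (e : CodeArc m ≃r CodeArc m)

lemma relIso_apply_last (hm : 4 ≤ m) (heven : Even m) : e (Fin.last _) = Fin.last _ := by
  by_contra hne
  obtain ⟨y, hy⟩ := exists_isNearTwin heven (Fin.val_lt_last hne)
  have htwin := hy.map e.symm
  rw [e.symm_apply_apply] at htwin
  exact not_isNearTwin_last hm htwin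

variable {e}

lemma relIso_apply_val_lt_iff (he : e (Fin.last _) = Fin.last _) :
    (e x).val < m ↔ x.val < m := by
  rw [← last_iff, ← last_iff, ← e.map_rel_iff (b := x), he]

lemma relIso_apply_val_succ (he : e (Fin.last _) = Fin.last _) (heven : Even m) (hy : y.val < m)
    (hxy : y.val = x.val + 1) : (e y).val = (e x).val + 1 := by
  have hx : x.val < m := by omega
  have harc : CodeArc m x y := (iff_of_lt hx hy).2 (by omega)
  have hopp := (oppositeOnOut_last_of_val_eq_succ hy hxy).map e
  rw [he] at hopp
  exact val_eq_succ_of_oppositeOnOut_last heven ((relIso_apply_val_lt_iff he).2 hx)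
    ((relIso_apply_val_lt_iff he).2 hy) (e.map_rel_iff.2 harc) hopp

lemma relIso_apply_of_lt (he : e (Fin.last _) = Fin.last _) (heven : Even m) (hx : x.val < m) :
    e x = x := by
  have hshift (k : ℕ) (hk : k < m) : (e ⟨k, by omega⟩).val = (e 0).val + k := by
    induction k with
    | zero => rfl
    | succ k ih =>
      rw [relIso_apply_val_succ (x := ⟨k, by omega⟩) he heven hk rfl, ih (by omega), Nat.add_assoc]
  have hlt : (e ⟨m - 1, by omega⟩).val < m := (relIso_apply_val_lt_iff he).2 (by grind)
  have h_zero : (e 0).val = 0 := by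
    rw [hshift (m - 1) (by omega)] at hlt
    omega
  exact Fin.ext (by simpa [h_zero] using hshift x hx)

lemma relIso_apply_of_ge (he : e (Fin.last _) = Fin.last _) (heven : Even m) (hx : m ≤ x.val)
    (hx' : x.val < 2 * m) : e x = x := by
  refine eq_of_forall_lt_iff ?_ ?_ hx hx' fun z hz => ?_
  · exact not_lt.1 ((relIso_apply_val_lt_iff he).not.2 hx.not_gt)
  · refine Fin.val_lt_last fun h => hx'.ne ?_
    rw [← he, e.apply_eq_iff_eq] at h
    rw [h, Fin.val_last]
  · rw [← e.map_rel_iff (a := x), relIso_apply_of_lt he heven hz]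

lemma relIso_apply (hm : 4 ≤ m) (heven : Even m) (e : CodeArc m ≃r CodeArc m)
    (x : Fin (2 * m + 1)) : e x = x := by
  have he := relIso_apply_last e hm heven
  obtain h_low | ⟨h_ge, h_lt⟩ | h_last :
      x.val < m ∨ (m ≤ x.val ∧ x.val < 2 * m) ∨ x.val = 2 * m := by omega
  · exact relIso_apply_of_lt he heven h_low
  · exact relIso_apply_of_ge he heven h_ge h_lt
  · rwa [Fin.ext (b := Fin.last _) h_last]

end CodeArc

/-- For even `m ≥ 4`, the automorphism group of `W_{1_m}` is trivial:
the only permutation of the vertices that is an automorphism of `W_{1_m}` is the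
identity. -/
theorem walecki_stmt2 (m : ℕ) (hm : 4 ≤ m) (heven : Even m)
    (φ : WVert m → WVert m)
    (hbij : Function.Bijective φ)
    (haut : ∀ x y : WVert m, warc m (onesSig m) x y ↔ warc m (onesSig m) (φ x) (φ y)) :
    φ = id := by
  have : NeZero m := ⟨by omega⟩
  let e : warc m (onesSig m) ≃r warc m (onesSig m) :=
    ⟨Equiv.ofBijective φ hbij, (haut _ _).symm⟩
  funext v
  have hfix : e v = v := by
    simpa using
      CodeArc.relIso_apply hm heven (((codeIso m).symm.trans e).trans (codeIso m)) (codeIso m v)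
  exact hfix
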